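/- Let Γ be an admissible finite nonempty set of invertible n×n real matrices, let x₀ ∈ ℝⁿ with x₀ ≠ 0, and let Λ* ∈ Γ be a minimizer of x₀ᵀM_Λx₀ over Λ ∈ Γ. Then Ψ(Λ* x₀; S*_Γ) < Ψ(x₀; S*_Γ), where Ψ denotes the gauge (Minkowski functional). -/

import Mathlib

open Matrix Set Filter Topology Pointwise

noncomputable section

/-- The quadratic form `xᵀ M x`. -/
def quadForm {n : ℕ} (M : Matrix (Fin n) (Fin n) ℝ) (x : Fin n → ℝ) : ℝ :=
  x ⬝ᵥ M.mulVec x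

/-- The ellipsoid `{x : xᵀ M x ≤ 1}`. -/
def ellipsoid {n : ℕ} (M : Matrix (Fin n) (Fin n) ℝ) : Set (Fin n → ℝ) :=
  {x | quadForm M x ≤ 1}

/-- `S*_Γ = ⋃_{Λ ∈ Γ} S_Λ` where `S_Λ = {x : xᵀ (ΛᵀM₀Λ) x ≤ 1}`. -/
def SStar {n : ℕ} (M₀ : Matrix (Fin n) (Fin n) ℝ)
    (Γ : Finset (Matrix (Fin n) (Fin n) ℝ)) : Set (Fin n → ℝ) :=
  ⋃ Λ ∈ Γ, ellipsoid (Λᵀ * M₀ * Λ)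

/-- The gauge (Minkowski functional) `Ψ(x;S) = inf {α : α ≥ 0 ∧ x ∈ α • S}`. -/
def gaugeFn {n : ℕ} (S : Set (Fin n → ℝ)) (x : Fin n → ℝ) : ℝ :=
  sInf {α : ℝ | 0 ≤ α ∧ x ∈ α • S}

/-!
Write `Ψ` for the gauge, `y = Λ* x₀` and `ρ = Ψ(y; S₀)`, the least of the numbers `Ψ(Λ x₀; S₀)`.
If `x₀ ∈ α S*`, then `Λ x₀ ∈ α S₀` for some `Λ ∈ Γ`, so `ρ ≤ α`; hence `ρ ≤ Ψ(x₀; S*)`.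
As `S₀` is closed, it contains `y / ρ`, which admissibility then puts in the interior of `S*`, where
the gauge of `S*` is less than `1`. Therefore `Ψ(y; S*) < ρ`.
-/

section Gauge

variable {E F ι : Type*} [AddCommGroup E] [Module ℝ E] [AddCommGroup F] [Module ℝ F]

theorem nonempty_of_gauge_pos {s : Set E} {x : E} (hx : 0 < gauge s x) :
    {r ∈ Ioi (0 : ℝ) | r⁻¹ • x ∈ s}.Nonempty := by
  rw [gauge_def'] at hx
  by_contra hempty
  rw [not_nonempty_iff_eq_empty.1 hempty, Real.sInf_empty] at hx
  exact hx.false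

theorem gauge_preimage (f : E →ₗ[ℝ] F) (s : Set F) (x : E) :
    gauge (f ⁻¹' s) x = gauge s (f x) := by
  simp only [gauge_def', mem_preimage, map_smul]

theorem le_gauge_iUnion [Nonempty ι] {s : ι → Set E} {x : E} {a : ℝ} (ha : 0 < a)
    (h : ∀ i, a ≤ gauge (s i) x) : a ≤ gauge (⋃ i, s i) x := by
  rw [gauge_def']
  refine le_csInf ?_ ?_
  · obtain ⟨i⟩ := ‹Nonempty ι›
    obtain ⟨r, hr, hrx⟩ := nonempty_of_gauge_pos (ha.trans_le (h i))
    exact ⟨r, hr, mem_iUnion_of_mem i hrx⟩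
  · rintro r ⟨hr : 0 < r, hrx⟩
    obtain ⟨i, hi⟩ := mem_iUnion.1 hrx
    exact (h i).trans (gauge_le_of_mem hr.le ((mem_smul_set_iff_inv_smul_mem₀ hr.ne' _ _).2 hi))

variable [TopologicalSpace E] [ContinuousSMul ℝ E]

theorem inv_gauge_smul_mem {s : Set E} (hs : IsClosed s) {x : E} (hx : 0 < gauge s x) :
    (gauge s x)⁻¹ • x ∈ s := by
  have hcont : ContinuousAt (fun r : ℝ => r⁻¹ • x) (gauge s x) :=
    (continuousAt_inv₀ hx.ne').smul continuousAt_const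
  have hmem : gauge s x ∈ closure {r ∈ Ioi (0 : ℝ) | r⁻¹ • x ∈ s} := by
    rw [gauge_def']
    exact csInf_mem_closure (nonempty_of_gauge_pos hx) ⟨0, fun r hr => hr.1.le⟩
  exact hs.closure_subset (hcont.continuousWithinAt.mem_closure hmem fun r hr => hr.2)

theorem gauge_lt_gauge_of_subset_interior {s t : Set E} (hs : IsClosed s) (hst : s ⊆ interior t)
    {x : E} (hx : 0 < gauge s x) : gauge t x < gauge s x := by
  have hlt : gauge t ((gauge s x)⁻¹ • x) < 1 :=
    interior_subset_gauge_lt_one t (hst (inv_gauge_smul_mem hs hx))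
  rwa [gauge_smul_of_nonneg (inv_nonneg.2 hx.le), smul_eq_mul, inv_mul_lt_one₀ hx] at hlt

theorem stmt8_general {s : Set E} (hs : IsClosed s) {f : ι → E →ₗ[ℝ] E}
    (hadm : s ⊆ interior (⋃ i, f i ⁻¹' s)) {x : E} {j : ι} (hx : 0 < gauge s (f j x))
    (hmin : ∀ i, gauge s (f j x) ≤ gauge s (f i x)) :
    gauge (⋃ i, f i ⁻¹' s) (f j x) < gauge (⋃ i, f i ⁻¹' s) x :=
  have : Nonempty ι := ⟨j⟩
  calc gauge (⋃ i, f i ⁻¹' s) (f j x)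
    _ < gauge s (f j x) := gauge_lt_gauge_of_subset_interior hs hadm hx
    _ ≤ gauge (⋃ i, f i ⁻¹' s) x :=
      le_gauge_iUnion hx fun i => (hmin i).trans_eq (gauge_preimage (f i) s x).symm

end Gauge

theorem gaugeFn_eq_gauge {n : ℕ} (s : Set (Fin n → ℝ)) (x : Fin n → ℝ) :
    gaugeFn s x = gauge s x := by
  obtain rfl | hx := eq_or_ne x 0
  · rw [gauge_zero]
    obtain rfl | hs := s.eq_empty_or_nonempty
    · simp [gaugeFn]
    · exact IsLeast.csInf_eq ⟨⟨le_rfl, by simp [zero_smul_set hs]⟩, fun r hr => hr.1⟩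
  · refine congrArg sInf (ext fun r => and_congr_left fun hxr => ?_)
    have hr : r ≠ 0 := by
      rintro rfl
      exact hx (zero_smul_set_subset s hxr)
    exact hr.symm.le_iff_lt

section Ellipsoid

variable {n : ℕ} (M : Matrix (Fin n) (Fin n) ℝ)

theorem quadForm_smul (c : ℝ) (x : Fin n → ℝ) : quadForm M (c • x) = c ^ 2 * quadForm M x := by
  simp only [quadForm, mulVec_smul, dotProduct_smul, smul_dotProduct, smul_eq_mul]
  ring

theorem quadForm_transpose_mul_mul (A : Matrix (Fin n) (Fin n) ℝ) (x : Fin n → ℝ) :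
    quadForm (Aᵀ * M * A) x = quadForm M (A *ᵥ x) := by
  simp only [quadForm, ← mulVec_mulVec, dotProduct_mulVec, vecMul_transpose]

theorem isClosed_ellipsoid : IsClosed (ellipsoid M) :=
  isClosed_le (continuous_id.dotProduct (continuous_const.matrix_mulVec continuous_id))
    continuous_const

theorem inv_smul_mem_ellipsoid_iff {r : ℝ} (hr : 0 < r) {x : Fin n → ℝ} :
    r⁻¹ • x ∈ ellipsoid M ↔ √(quadForm M x) ≤ r := by
  rw [Real.sqrt_le_left hr.le, ellipsoid, mem_ofPred_eq, quadForm_smul, inv_pow,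
    inv_mul_le_one₀ (pow_pos hr 2)]

-- For `xᵀ M x ≤ 0` the whole ray through `x` lies in the set; `Real.sqrt` vanishes there as well.
theorem gauge_ellipsoid (x : Fin n → ℝ) : gauge (ellipsoid M) x = √(quadForm M x) := by
  have hset : {r ∈ Ioi (0 : ℝ) | r⁻¹ • x ∈ ellipsoid M} = {r ∈ Ioi 0 | √(quadForm M x) ≤ r} :=
    ext fun r => and_congr_right fun hr => inv_smul_mem_ellipsoid_iff M hr
  rw [gauge_def', hset]
  have hnonneg := Real.sqrt_nonneg (quadForm M x)
  refine csInf_eq_of_forall_ge_of_forall_gt_exists_lt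
    ⟨√(quadForm M x) + 1, add_pos_of_nonneg_of_pos hnonneg one_pos, by simp⟩ (fun r hr => hr.2) ?_
  intro c hc
  obtain ⟨r, hr, hrc⟩ := exists_between hc
  exact ⟨r, ⟨hnonneg.trans_lt hr, hr.le⟩, hrc⟩

theorem gauge_ellipsoid_le_gauge_ellipsoid {x y : Fin n → ℝ} (h : quadForm M x ≤ quadForm M y) :
    gauge (ellipsoid M) x ≤ gauge (ellipsoid M) y := by
  simpa only [gauge_ellipsoid] using Real.sqrt_le_sqrt h

theorem gauge_ellipsoid_pos {M : Matrix (Fin n) (Fin n) ℝ} (hM : M.PosDef) {x : Fin n → ℝ}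
    (hx : x ≠ 0) : 0 < gauge (ellipsoid M) x := by
  rw [gauge_ellipsoid]
  exact Real.sqrt_pos.2 (hM.dotProduct_mulVec_pos hx)

theorem SStar_eq_iUnion_preimage (Γ : Finset (Matrix (Fin n) (Fin n) ℝ)) :
    SStar M Γ = ⋃ Λ : Γ, Λ.1.mulVecLin ⁻¹' ellipsoid M := by
  ext x
  simp [SStar, ellipsoid, quadForm_transpose_mul_mul]

end Ellipsoid

/-- Lemma C.2, item 1: if Γ is admissible, x₀ ≠ 0 and Λ* minimizes
x₀ᵀM_Λx₀ over Λ ∈ Γ, then Ψ(Λ*x₀; S*_Γ) < Ψ(x₀; S*_Γ). -/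
theorem stmt8 {n : ℕ} (hn : 0 < n)
    (M₀ : Matrix (Fin n) (Fin n) ℝ) (hM₀ : M₀.PosDef)
    (Γ : Finset (Matrix (Fin n) (Fin n) ℝ)) (hΓ : Γ.Nonempty)
    (hinv : ∀ Λ ∈ Γ, IsUnit Λ.det)
    (hadm : ellipsoid M₀ ⊆ interior (SStar M₀ Γ))
    (x₀ : Fin n → ℝ) (hx₀ : x₀ ≠ 0)
    (Λs : Matrix (Fin n) (Fin n) ℝ) (hΛs : Λs ∈ Γ)
    (hmin : ∀ Λ ∈ Γ, quadForm (Λsᵀ * M₀ * Λs) x₀ ≤ quadForm (Λᵀ * M₀ * Λ) x₀) :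
    gaugeFn (SStar M₀ Γ) (Λs.mulVec x₀) < gaugeFn (SStar M₀ Γ) x₀ := by
  have hΛsx₀ : Λs *ᵥ x₀ ≠ 0 := fun h => hx₀ (eq_zero_of_mulVec_eq_zero (hinv Λs hΛs).ne_zero h)
  simp only [gaugeFn_eq_gauge, SStar_eq_iUnion_preimage, quadForm_transpose_mul_mul] at hadm hmin ⊢
  exact stmt8_general (isClosed_ellipsoid M₀) hadm (j := ⟨Λs, hΛs⟩) (gauge_ellipsoid_pos hM₀ hΛsx₀)
    fun Λ => gauge_ellipsoid_le_gauge_ellipsoid M₀ (hmin Λ Λ.2)
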